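/- Let X ∈ ℝ^{n×d} with n ≥ d satisfy XᵀX = C_X² I_d for some C_X > 0, and suppose its i-th row x_i has Euclidean norm exactly C_X. Let σ > 0, k ≥ 1, set γ := (σ² + C_X²)/C_X², and let X' be obtained from X by replacing the row x_i with the zero vector. Then for every α ∈ (1, γ), D_α(M(X)‖M(X')) = φ(α; k, γ); i.e., the Rényi differential privacy bound φ of the Gaussian mixing mechanism is achieved with equality for such inputs. -/

import Mathlib

open MeasureTheory ProbabilityTheory Matrix

/-- Law of the Gaussian random matrix with i.i.d. standard Gaussian entries. -/
noncomputable def stdGaussMat (k n : ℕ) : Measure (Fin k → Fin n → ℝ) :=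
  Measure.pi fun _ => Measure.pi fun _ => gaussianReal 0 1

/-- The Gaussian mixing mechanism `M(X) = S X + σ ξ` with `S, ξ` independent
matrices of i.i.d. standard Gaussian entries: this is the law of the output. -/
noncomputable def gaussMix {n d : ℕ} (k : ℕ) (σ : ℝ) (X : Matrix (Fin n) (Fin d) ℝ) :
    Measure (Fin k → Fin d → ℝ) :=
  Measure.map (fun p => fun i j => (∑ l, p.1 i l * X l j) + σ * p.2 i j)
    ((stdGaussMat k n).prod (stdGaussMat k d))

/-- The `α`-Rényi divergence `D_α(P‖Q) = (α-1)⁻¹ log ∫ (dP/dQ)^α dQ`. -/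
noncomputable def renyiDiv {Ω : Type*} [MeasurableSpace Ω] (α : ℝ) (P Q : Measure Ω) : ℝ :=
  (α - 1)⁻¹ * Real.log (∫ x, ((P.rnDeriv Q) x).toReal ^ α ∂Q)

/-- The privacy curve `φ(α; k, ζ)`. -/
noncomputable def phi (α k ζ : ℝ) : ℝ :=
  k * α / (2 * (α - 1)) * Real.log (1 - 1 / ζ)
    - k / (2 * (α - 1)) * Real.log (1 - α / ζ)

/-- Minimal eigenvalue of a (Hermitian) real matrix. -/
noncomputable def lamMin {d : ℕ} (A : Matrix (Fin d) (Fin d) ℝ) : ℝ :=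
  if h : A.IsHermitian then ⨅ i, h.eigenvalues i else 0

open scoped ENNReal NNReal

/-- A product of measures with densities has the product density. -/
lemma pi_withDensity_ofReal {ι : Type*} [Fintype ι] {E : ι → Type*}
    {mE : ∀ i, MeasurableSpace (E i)} (μ : ∀ i, Measure (E i)) [∀ i, SigmaFinite (μ i)]
    {f : ∀ i, E i → ℝ} (hf : ∀ i, Integrable (f i) (μ i)) (hf0 : ∀ i x, 0 ≤ f i x) :
    Measure.pi (fun i => (μ i).withDensity fun x => ENNReal.ofReal (f i x)) =
      (Measure.pi μ).withDensity fun x => ENNReal.ofReal (∏ i, f i (x i)) := by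
  have (i : ι) : IsFiniteMeasure ((μ i).withDensity fun x => ENNReal.ofReal (f i x)) :=
    isFiniteMeasure_withDensity_ofReal (hf i).2
  refine Measure.pi_eq fun s hs => ?_
  have hint : Integrable (fun x : ∀ i, E i => ∏ i, f i (x i))
      (Measure.pi fun i => (μ i).restrict (s i)) :=
    Integrable.fintype_prod_dep fun i => (hf i).restrict
  rw [withDensity_apply _ (MeasurableSet.univ_pi hs), Measure.restrict_pi_pi,
    ← ofReal_integral_eq_lintegral_ofReal hint
      (ae_of_all _ fun x => Finset.prod_nonneg fun i _ => hf0 i (x i)),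
    integral_fintype_prod_eq_prod,
    ENNReal.ofReal_prod_of_nonneg fun i _ => integral_nonneg (hf0 i)]
  refine Finset.prod_congr rfl fun i _ => ?_
  rw [withDensity_apply _ (hs i), ofReal_integral_eq_lintegral_ofReal (hf i).restrict
    (ae_of_all _ (hf0 i))]

/-- Pushing forward commutes with densities that factor through the map. -/
lemma map_withDensity_comp {E F : Type*} [MeasurableSpace E] [MeasurableSpace F] (μ : Measure E)
    {T : E → F} (hT : Measurable T) {g : F → ℝ≥0∞} (hg : Measurable g) :
    (μ.withDensity (g ∘ T)).map T = (μ.map T).withDensity g := by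
  ext s hs
  rw [Measure.map_apply hT hs, withDensity_apply _ (hT hs), withDensity_apply _ hs,
    setLIntegral_map hs hg hT]
  rfl

/-- The likelihood ratio of two centered real Gaussians. -/
noncomputable def gaussRatio (v₁ v₀ : ℝ≥0) (x : ℝ) : ℝ :=
  gaussianPDFReal 0 v₁ x / gaussianPDFReal 0 v₀ x

lemma gaussRatio_nonneg (v₁ v₀ : ℝ≥0) (x : ℝ) : 0 ≤ gaussRatio v₁ v₀ x :=
  div_nonneg (gaussianPDFReal_nonneg _ _ _) (gaussianPDFReal_nonneg _ _ _)

lemma measurable_gaussRatio (v₁ v₀ : ℝ≥0) : Measurable (gaussRatio v₁ v₀) :=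
  (measurable_gaussianPDFReal _ _).div (measurable_gaussianPDFReal _ _)

lemma gaussianReal_eq_withDensity_gaussRatio {v₁ v₀ : ℝ≥0} (h₁ : v₁ ≠ 0) (h₀ : v₀ ≠ 0) :
    gaussianReal 0 v₁ =
      (gaussianReal 0 v₀).withDensity fun x => ENNReal.ofReal (gaussRatio v₁ v₀ x) := by
  rw [gaussianReal_of_var_ne_zero _ h₁, gaussianReal_of_var_ne_zero _ h₀,
    ← withDensity_mul _ (measurable_gaussianPDF _ _) (measurable_gaussRatio _ _).ennreal_ofReal]
  congr 1
  ext x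
  have := gaussianPDFReal_pos 0 v₀ x h₀
  simp only [Pi.mul_apply, gaussianPDF, gaussRatio]
  rw [← ENNReal.ofReal_mul this.le, mul_div_cancel₀ _ this.ne']

lemma integrable_gaussRatio {v₁ v₀ : ℝ≥0} (h₁ : v₁ ≠ 0) (h₀ : v₀ ≠ 0) :
    Integrable (gaussRatio v₁ v₀) (gaussianReal 0 v₀) := by
  refine ⟨(measurable_gaussRatio _ _).aestronglyMeasurable, ?_⟩
  rw [hasFiniteIntegral_iff_ofReal (ae_of_all _ (gaussRatio_nonneg _ _))]
  have h := congrArg (· Set.univ) (gaussianReal_eq_withDensity_gaussRatio h₁ h₀)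
  simp only [measure_univ, withDensity_apply _ MeasurableSet.univ, Measure.restrict_univ] at h
  simp [← h]

lemma gaussRatio_eq {v₁ v₀ : ℝ≥0} (h₁ : v₁ ≠ 0) (h₀ : v₀ ≠ 0) (x : ℝ) :
    gaussRatio v₁ v₀ x =
      √(v₀ / v₁ : ℝ) * Real.exp (-((v₁ : ℝ)⁻¹ - (v₀ : ℝ)⁻¹) / 2 * x ^ 2) := by
  have h₁' : (0 : ℝ) < v₁ := by positivity
  have h₀' : (0 : ℝ) < v₀ := by positivity
  have hπ := Real.pi_pos
  rw [gaussRatio, gaussianPDFReal, gaussianPDFReal, mul_div_mul_comm, ← Real.exp_sub, inv_div_inv,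
    ← Real.sqrt_div (by positivity)]
  congr 2 <;> field_simp
  ring

/-- The Hellinger-type integral of two centered real Gaussians. -/
lemma integral_gaussRatio_rpow {v₁ v₀ : ℝ≥0} (h₁ : v₁ ≠ 0) (h₀ : v₀ ≠ 0) (α : ℝ) :
    ∫ x, gaussRatio v₁ v₀ x ^ α ∂gaussianReal 0 v₀ =
      √(v₀ / v₁ : ℝ) ^ α * (√(1 - α * (1 - v₀ / v₁) : ℝ))⁻¹ := by
  have h₁' : (0 : ℝ) < v₁ := by positivity
  have h₀' : (0 : ℝ) < v₀ := by positivity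
  have hπ := Real.pi_pos
  have hpt (x : ℝ) : gaussianPDFReal 0 v₀ x • gaussRatio v₁ v₀ x ^ α =
      √(v₀ / v₁ : ℝ) ^ α * (√(2 * Real.pi * v₀))⁻¹ *
        Real.exp (-((1 - α * (1 - v₀ / v₁)) / (2 * v₀) : ℝ) * x ^ 2) := by
    rw [gaussRatio_eq h₁ h₀, Real.mul_rpow (by positivity) (by positivity), ← Real.exp_mul,
      gaussianPDFReal, smul_eq_mul]
    rw [show ∀ a b c d : ℝ, a * b * (c * d) = c * a * (b * d) by intros; ring, ← Real.exp_add]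
    congr 2
    field_simp
    ring
  rw [integral_gaussianReal_eq_integral_smul h₀]
  simp_rw [hpt]
  rw [integral_const_mul, integral_gaussian, mul_assoc, ← Real.sqrt_inv, ← Real.sqrt_inv,
    ← Real.sqrt_mul (by positivity)]
  congr 2
  rw [div_div_eq_mul_div, ← div_eq_inv_mul, div_right_comm, inv_eq_one_div]
  congr 1
  field_simp

lemma charFunDual_gaussianReal_zero (v : ℝ≥0) (L : StrongDual ℝ ℝ) :
    charFunDual (gaussianReal 0 v) L = Complex.exp (-(v * L 1 ^ 2 / 2 : ℝ)) := by
  have hL (x : ℝ) : L x = L 1 * x := by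
    have := L.map_smul x 1
    rw [smul_eq_mul, mul_one] at this
    rw [this, smul_eq_mul, mul_comm]
  have h : charFunDual (gaussianReal 0 v) L = charFun (gaussianReal 0 v) (L 1) := by
    rw [charFunDual_apply, charFun_apply_real]
    congr 1
    ext x
    rw [hL x]
    push_cast
    rfl
  rw [h, charFun_gaussianReal]
  congr 1
  push_cast
  ring

lemma charFunDual_pi_gaussianReal_zero {ι : Type*} [Fintype ι] [DecidableEq ι] (v : ℝ≥0)
    (L : StrongDual ℝ (ι → ℝ)) :
    charFunDual (Measure.pi fun _ => gaussianReal 0 v) L =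
      Complex.exp (-(v * (∑ i, L (Pi.single i 1) ^ 2) / 2 : ℝ)) := by
  simp_rw [charFunDual_pi, charFunDual_gaussianReal_zero, ← Complex.exp_sum]
  congr 1
  simp [Finset.mul_sum, Finset.sum_div]

lemma charFunDual_stdGaussMat (k n : ℕ) (L : StrongDual ℝ (Fin k → Fin n → ℝ)) :
    charFunDual (stdGaussMat k n) L =
      Complex.exp (-((∑ i, ∑ j, L (Pi.single i (Pi.single j 1)) ^ 2) / 2 : ℝ)) := by
  rw [stdGaussMat, charFunDual_pi]
  simp_rw [charFunDual_pi_gaussianReal_zero, ← Complex.exp_sum]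
  congr 1
  simp [Finset.sum_div]

instance isProbabilityMeasure_stdGaussMat (k n : ℕ) :
    IsProbabilityMeasure (stdGaussMat k n) := by
  unfold stdGaussMat; infer_instance

lemma StrongDual.apply_eq_sum_single {k d : ℕ} (L : StrongDual ℝ (Fin k → Fin d → ℝ))
    (y : Fin k → Fin d → ℝ) : L y = ∑ i, ∑ j, y i j * L (Pi.single i (Pi.single j 1)) := by
  have : y = ∑ i, ∑ j, y i j • Pi.single i (Pi.single j (1 : ℝ)) := by
    ext a b
    simp [Finset.sum_apply, Pi.single_apply, ite_apply]
  conv_lhs => rw [this]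
  simp

/-- The linear map `(S, ξ) ↦ S X + σ ξ`. -/
noncomputable def mixCLM {n d : ℕ} (k : ℕ) (σ : ℝ) (X : Matrix (Fin n) (Fin d) ℝ) :
    (Fin k → Fin n → ℝ) × (Fin k → Fin d → ℝ) →L[ℝ] (Fin k → Fin d → ℝ) :=
  LinearMap.toContinuousLinearMap
    { toFun := fun p i j => (∑ l, p.1 i l * X l j) + σ * p.2 i j
      map_add' := fun p q => by
        ext i j
        simp [add_mul, Finset.sum_add_distrib]
        ring
      map_smul' := fun c p => by
        ext i j
        simp [mul_add, Finset.mul_sum, mul_assoc, mul_left_comm] }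

/-- The linear map sending `(G, a)` to the matrix whose rows are `τ` times the projections of the
rows of `G` onto the orthogonal complement of the unit vector `u`, plus `a` times `u`. -/
noncomputable def spikeCLM {d : ℕ} (k : ℕ) (τ : ℝ) (u : Fin d → ℝ) :
    (Fin k → Fin d → ℝ) × (Fin k → ℝ) →L[ℝ] (Fin k → Fin d → ℝ) :=
  LinearMap.toContinuousLinearMap
    { toFun := fun p i j => τ * (p.1 i j - (∑ l, p.1 i l * u l) * u j) + p.2 i * u j
      map_add' := fun p q => by
        ext i j
        simp [add_mul, Finset.sum_add_distrib]
        ring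
      map_smul' := fun c p => by
        ext i j
        simp [mul_assoc, ← Finset.mul_sum]
        ring }

@[simp]
lemma mixCLM_apply {n d : ℕ} (k : ℕ) (σ : ℝ) (X : Matrix (Fin n) (Fin d) ℝ)
    (p : (Fin k → Fin n → ℝ) × (Fin k → Fin d → ℝ)) (i : Fin k) (j : Fin d) :
    mixCLM k σ X p i j = (∑ l, p.1 i l * X l j) + σ * p.2 i j := rfl

@[simp]
lemma spikeCLM_apply {d : ℕ} (k : ℕ) (τ : ℝ) (u : Fin d → ℝ)
    (p : (Fin k → Fin d → ℝ) × (Fin k → ℝ)) (i : Fin k) (j : Fin d) :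
    spikeCLM k τ u p i j = τ * (p.1 i j - (∑ l, p.1 i l * u l) * u j) + p.2 i * u j := rfl

lemma sum_spikeCLM_mul {d : ℕ} (k : ℕ) (τ : ℝ) {u : Fin d → ℝ} (hu : ∑ j, u j ^ 2 = 1)
    (p : (Fin k → Fin d → ℝ) × (Fin k → ℝ)) (i : Fin k) :
    ∑ j, spikeCLM k τ u p i j * u j = p.2 i := by
  have h (j : Fin d) : spikeCLM k τ u p i j * u j =
      τ * (p.1 i j * u j) - (τ * ∑ l, p.1 i l * u l) * u j ^ 2 + p.2 i * u j ^ 2 := by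
    rw [spikeCLM_apply]; ring
  simp_rw [h, Finset.sum_add_distrib, Finset.sum_sub_distrib, ← Finset.mul_sum, hu]
  ring

/-- If the rows of the mixed output have covariance `τ² (I - u uᵀ) + v u uᵀ`, the law of the output
is that of the spiked representation. -/
lemma gaussMix_eq_map_spikeCLM {n d : ℕ} (k : ℕ) (σ τ : ℝ) (v : ℝ≥0)
    (X : Matrix (Fin n) (Fin d) ℝ) {u : Fin d → ℝ} (hu : ∑ j, u j ^ 2 = 1)
    (hX : ∀ t : Fin d → ℝ, ∑ l, (∑ j, X l j * t j) ^ 2 + σ ^ 2 * ∑ j, t j ^ 2 =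
      τ ^ 2 * (∑ j, t j ^ 2 - (∑ j, u j * t j) ^ 2) + v * (∑ j, u j * t j) ^ 2) :
    gaussMix k σ X = ((stdGaussMat k d).prod (Measure.pi fun _ => gaussianReal 0 v)).map
      (spikeCLM k τ u) := by
  change ((stdGaussMat k n).prod (stdGaussMat k d)).map (mixCLM k σ X) = _
  refine Measure.ext_of_charFunDual ?_
  ext L
  set t : Fin k → Fin d → ℝ := fun i j => L (Pi.single i (Pi.single j 1)) with ht
  rw [charFunDual_map, charFunDual_map, charFunDual_prod, charFunDual_prod,
    charFunDual_stdGaussMat, charFunDual_stdGaussMat, charFunDual_stdGaussMat,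
    charFunDual_pi_gaussianReal_zero, ← Complex.exp_add, ← Complex.exp_add]
  have h1 (i : Fin k) (l : Fin n) :
      L (mixCLM k σ X (Pi.single i (Pi.single l 1), 0)) = ∑ j, X l j * t i j := by
    rw [StrongDual.apply_eq_sum_single, Finset.sum_eq_single i]
    · simp [Pi.single_apply, ht]
    · intro b _ hb
      simp [Pi.single_eq_of_ne hb]
    · simp
  have h2 (i : Fin k) (j : Fin d) :
      L (mixCLM k σ X (0, Pi.single i (Pi.single j 1))) = σ * t i j := by
    have : mixCLM k σ X (0, Pi.single i (Pi.single j 1)) =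
        σ • Pi.single i (Pi.single j (1 : ℝ)) := by
      ext a b; simp
    rw [this, map_smul, smul_eq_mul]
  have h3 (i : Fin k) (j : Fin d) :
      L (spikeCLM k τ u (Pi.single i (Pi.single j 1), 0)) =
        τ * (t i j - (∑ l, u l * t i l) * u j) := by
    rw [StrongDual.apply_eq_sum_single, Finset.sum_eq_single i]
    · simp [Pi.single_apply, mul_sub, sub_mul, Finset.sum_sub_distrib, ht, Finset.mul_sum,
        Finset.sum_mul]
      exact Finset.sum_congr rfl fun _ _ => by ring
    · intro b _ hb
      simp [Pi.single_eq_of_ne hb]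
    · simp
  have h4 (i : Fin k) :
      L (spikeCLM k τ u (0, Pi.single i 1)) = ∑ j, u j * t i j := by
    rw [StrongDual.apply_eq_sum_single, Finset.sum_eq_single i]
    · simp [ht]
    · intro b _ hb
      simp [Pi.single_eq_of_ne hb]
    · simp
  have h5 (i : Fin k) : ∑ j, (τ * (t i j - (∑ l, u l * t i l) * u j)) ^ 2 =
      τ ^ 2 * (∑ j, t i j ^ 2 - (∑ j, u j * t i j) ^ 2) := by
    have h (j : Fin d) : (τ * (t i j - (∑ l, u l * t i l) * u j)) ^ 2 =
        τ ^ 2 * t i j ^ 2 - (2 * τ ^ 2 * ∑ l, u l * t i l) * (u j * t i j)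
          + (τ ^ 2 * (∑ l, u l * t i l) ^ 2) * u j ^ 2 := by ring
    simp_rw [h, Finset.sum_add_distrib, Finset.sum_sub_distrib, ← Finset.mul_sum, hu]
    ring
  have key : ∑ i, ∑ l, (∑ j, X l j * t i j) ^ 2 + ∑ i, ∑ j, (σ * t i j) ^ 2 =
      ∑ i, ∑ j, (τ * (t i j - (∑ l, u l * t i l) * u j)) ^ 2
        + v * ∑ i, (∑ j, u j * t i j) ^ 2 := by
    rw [Finset.mul_sum, ← Finset.sum_add_distrib, ← Finset.sum_add_distrib]
    refine Finset.sum_congr rfl fun i _ => ?_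
    rw [h5, ← hX (t i)]
    simp_rw [mul_pow, Finset.mul_sum]
  simp only [ContinuousLinearMap.comp_apply, ContinuousLinearMap.inl_apply,
    ContinuousLinearMap.inr_apply, h1, h2, h3, h4]
  congr 1
  rw [← neg_add, ← neg_add, ← Complex.ofReal_add, ← Complex.ofReal_add, ← add_div, ← add_div, key]

/-- The Rényi integral of two spiked Gaussian laws differing only in the spike variance. -/
lemma integral_rnDeriv_spike_rpow {d : ℕ} (k : ℕ) (τ : ℝ) {v₁ v₀ : ℝ≥0} (h₁ : v₁ ≠ 0)
    (h₀ : v₀ ≠ 0) {u : Fin d → ℝ} (hu : ∑ j, u j ^ 2 = 1) (α : ℝ) {P Q : Measure _}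
    (hP : P = ((stdGaussMat k d).prod (Measure.pi fun _ => gaussianReal 0 v₁)).map
      (spikeCLM k τ u))
    (hQ : Q = ((stdGaussMat k d).prod (Measure.pi fun _ => gaussianReal 0 v₀)).map
      (spikeCLM k τ u)) :
    ∫ y, (P.rnDeriv Q y).toReal ^ α ∂Q =
      (√(v₀ / v₁ : ℝ) ^ α * (√(1 - α * (1 - v₀ / v₁) : ℝ))⁻¹) ^ k := by
  set T := spikeCLM k τ u
  have hT : Measurable T := T.continuous.measurable
  let ρ : (Fin k → ℝ) → ℝ := fun a => ∏ i, gaussRatio v₁ v₀ (a i)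
  have hρ : Measurable ρ := Finset.measurable_prod _ fun i _ =>
    (measurable_gaussRatio v₁ v₀).comp (measurable_pi_apply i)
  have hρ0 (a) : 0 ≤ ρ a := Finset.prod_nonneg fun i _ => gaussRatio_nonneg _ _ _
  let g : (Fin k → Fin d → ℝ) → ℝ := fun y => ρ fun i => ∑ j, y i j * u j
  have hg : Measurable g := hρ.comp (by fun_prop)
  have hgT (p) : g (T p) = ρ p.2 := by
    simp only [g, T, sum_spikeCLM_mul k τ hu]
  have hPQ : P = Q.withDensity fun y => ENNReal.ofReal (g y) := by
    rw [hP, hQ, ← map_withDensity_comp _ hT hg.ennreal_ofReal]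
    congr 1
    rw [gaussianReal_eq_withDensity_gaussRatio h₁ h₀,
      pi_withDensity_ofReal _ (fun _ => integrable_gaussRatio h₁ h₀)
        (fun _ => gaussRatio_nonneg _ _),
      prod_withDensity_right hρ.ennreal_ofReal]
    congr 1
    ext p
    simp [hgT, ρ]
  have : IsFiniteMeasure Q := by rw [hQ]; infer_instance
  have hae : (fun y => (P.rnDeriv Q y).toReal ^ α) =ᵐ[Q] fun y => g y ^ α := by
    filter_upwards [hPQ ▸ Measure.rnDeriv_withDensity Q hg.ennreal_ofReal] with y hy
    rw [hy, ENNReal.toReal_ofReal (hρ0 _)]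
  rw [integral_congr_ae hae, hQ, integral_map hT.aemeasurable
    (hg.pow_const α).aestronglyMeasurable]
  simp_rw [hgT]
  rw [integral_fun_snd (fun a => ρ a ^ α)]
  simp_rw [ρ, ← Real.finsetProd_rpow _ _ fun i _ => gaussRatio_nonneg _ _ _]
  rw [integral_fintype_prod_eq_pow (fun x => gaussRatio v₁ v₀ x ^ α),
    integral_gaussRatio_rpow h₁ h₀]
  simp

/-- For a scaled isometry, `‖X t‖² = c ‖t‖²`. -/
lemma sum_sq_mulVec_of_transpose_mul_self {n d : ℕ} {X : Matrix (Fin n) (Fin d) ℝ} {c : ℝ}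
    (h : Xᵀ * X = c • (1 : Matrix (Fin d) (Fin d) ℝ)) (t : Fin d → ℝ) :
    ∑ l, (∑ j, X l j * t j) ^ 2 = c * ∑ j, t j ^ 2 := by
  have h1 : (X *ᵥ t) ⬝ᵥ (X *ᵥ t) = c * (t ⬝ᵥ t) := by
    rw [Matrix.dotProduct_mulVec, ← Matrix.mulVec_transpose, Matrix.mulVec_mulVec, h,
      Matrix.smul_mulVec, Matrix.one_mulVec, smul_dotProduct, smul_eq_mul]
  simpa [dotProduct, Matrix.mulVec, sq] using h1

/-- the Rényi-DP bound `φ` of the Gaussian mixing mechanism is achieved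
with equality when `XᵀX = C_X² I` and the zeroed-out row has norm exactly `C_X`. -/
theorem gaussMix_renyiDiv_eq_phi {n d : ℕ} (hnd : d ≤ n)
    (X : Matrix (Fin n) (Fin d) ℝ) (CX σ γ : ℝ) (k : ℕ) (hk : 1 ≤ k)
    (hCX : 0 < CX)
    (hXtX : Xᵀ * X = CX ^ 2 • (1 : Matrix (Fin d) (Fin d) ℝ))
    (i : Fin n) (hrow : Real.sqrt (∑ j, X i j ^ 2) = CX)
    (hσ : 0 < σ)
    (hγ : γ = (σ ^ 2 + CX ^ 2) / CX ^ 2)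
    (X' : Matrix (Fin n) (Fin d) ℝ) (hX' : X' = X.updateRow i 0)
    (α : ℝ) (hα : α ∈ Set.Ioo 1 γ) :
    renyiDiv α (gaussMix k σ X) (gaussMix k σ X') = phi α k γ := by
  have hCX2 : 0 < CX ^ 2 := by positivity
  have hrow2 : ∑ j, X i j ^ 2 = CX ^ 2 := by
    rw [← hrow, Real.sq_sqrt (Finset.sum_nonneg fun j _ => sq_nonneg _)]
  set u : Fin d → ℝ := fun j => X i j / CX with hu_def
  have hu : ∑ j, u j ^ 2 = 1 := by
    simp_rw [hu_def, div_pow, ← Finset.sum_div, hrow2, div_self hCX2.ne']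
  let v₁ : ℝ≥0 := ⟨σ ^ 2 + CX ^ 2, by positivity⟩
  let v₀ : ℝ≥0 := ⟨σ ^ 2, by positivity⟩
  have hv₁ : (v₁ : ℝ) = σ ^ 2 + CX ^ 2 := rfl
  have hv₀ : (v₀ : ℝ) = σ ^ 2 := rfl
  have h₁ : v₁ ≠ 0 := by rw [← NNReal.coe_ne_zero, hv₁]; positivity
  have h₀ : v₀ ≠ 0 := by rw [← NNReal.coe_ne_zero, hv₀]; positivity
  have hτ : √(σ ^ 2 + CX ^ 2) ^ 2 = σ ^ 2 + CX ^ 2 := Real.sq_sqrt (by positivity)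
  have hut (t : Fin d → ℝ) : (∑ j, X i j * t j) ^ 2 = CX ^ 2 * (∑ j, u j * t j) ^ 2 := by
    rw [← mul_pow, Finset.mul_sum]
    congr 1
    refine Finset.sum_congr rfl fun j _ => ?_
    simp only [hu_def]
    field_simp
  have hX't (t : Fin d → ℝ) : ∑ l, (∑ j, X' l j * t j) ^ 2 =
      ∑ l, (∑ j, X l j * t j) ^ 2 - (∑ j, X i j * t j) ^ 2 := by
    rw [← Finset.add_sum_erase _ _ (Finset.mem_univ i),
      ← Finset.add_sum_erase _ (fun l => (∑ j, X l j * t j) ^ 2) (Finset.mem_univ i), hX']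
    simp only [Matrix.updateRow_self, Pi.zero_apply, zero_mul, Finset.sum_const_zero]
    rw [Finset.sum_congr rfl fun l hl => by
      rw [Matrix.updateRow_ne (Finset.ne_of_mem_erase hl)]]
    ring
  have hP := gaussMix_eq_map_spikeCLM k σ (√(σ ^ 2 + CX ^ 2)) v₁ X hu fun t => by
    rw [sum_sq_mulVec_of_transpose_mul_self hXtX, hτ, hv₁]; ring
  have hQ := gaussMix_eq_map_spikeCLM k σ (√(σ ^ 2 + CX ^ 2)) v₀ X' hu fun t => by
    rw [hX't, hut, sum_sq_mulVec_of_transpose_mul_self hXtX, hτ, hv₀]; ring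
  have hr : (v₀ / v₁ : ℝ) = 1 - 1 / γ := by
    rw [hv₀, hv₁, hγ]; field_simp; ring
  have hγ0 : 0 < γ := by linarith [hα.1, hα.2]
  have hr0 : 0 < 1 - 1 / γ := by
    rw [← hr, hv₀, hv₁]; positivity
  have hs0 : 0 < 1 - α / γ := by
    rw [sub_pos, div_lt_one hγ0]; exact hα.2
  have hα1 : α - 1 ≠ 0 := by linarith [hα.1]
  rw [renyiDiv, integral_rnDeriv_spike_rpow k _ h₁ h₀ hu α hP hQ, hr,
    show 1 - α * (1 - (1 - 1 / γ)) = 1 - α / γ by ring, Real.log_pow,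
    Real.log_mul (by positivity) (by positivity), Real.log_rpow (by positivity), Real.log_inv,
    Real.log_sqrt hr0.le, Real.log_sqrt hs0.le, phi]
  field_simp
  ring
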